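/- Let S ∈ sp(n,ℂ) and let S_i be its part corresponding to the non-real eigenvalues ±ω_1,…,±ω_{n_1} (listed with multiplicities, Im ω_j > 0), and let ℓ+1 be the dimension of the largest Jordan block of S_i. Then there exist complex quadratic forms Q_{jk} on ℂ^{2n} (1 ≤ j ≤ n_1, 0 ≤ k ≤ ℓ) such that, for all t for which cos(tS_i) is invertible, σ(w, tan(tS_i)w) = Σ_{j=1}^{n_1} Σ_{k=0}^{ℓ} t^k tan^{(k)}(ω_j t) Q_{jk}(w) for all w, where tan^{(k)} denotes the k-th derivative of the tangent function. -/

import Mathlib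

open MeasureTheory Complex Matrix

noncomputable section

/-- Index type for `2n`-dimensional (symplectic) vectors: `X`-coordinates `inl j`,
`Y`-coordinates `inr j`. -/
abbrev Idx (n : ℕ) := Fin n ⊕ Fin n

/-- The standard symplectic matrix `J = [[0, I],[-I, 0]]` over `ℂ`. -/
def Jmat (n : ℕ) : Matrix (Idx n) (Idx n) ℂ := Matrix.fromBlocks 0 1 (-1) 0

/-- The standard symplectic matrix `J = [[0, I],[-I, 0]]` over `ℝ`. -/
def JmatR (n : ℕ) : Matrix (Idx n) (Idx n) ℝ := Matrix.fromBlocks 0 1 (-1) 0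

/-- The standard symplectic form `σ(z,w) = ᵗz J w` on `ℂ^{2n}`. -/
def sigmaC (n : ℕ) (z w : Idx n → ℂ) : ℂ := z ⬝ᵥ (Jmat n).mulVec w

/-- The standard symplectic form on `ℝ^{2n}`. -/
def sigmaR (n : ℕ) (v w : Idx n → ℝ) : ℝ := v ⬝ᵥ (JmatR n).mulVec w

/-- Inclusion of real vectors into `ℂ^{2n}`. -/
def realVec (n : ℕ) (v : Idx n → ℝ) : Idx n → ℂ := fun i => (v i : ℂ)

/-- Complex conjugation on `ℂ^{2n}` relative to the real form `ℝ^{2n}`. -/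
def conjVec (n : ℕ) (z : Idx n → ℂ) : Idx n → ℂ := fun i => (starRingEnd ℂ) (z i)

/-- `S ∈ sp(n, ℂ)`, i.e. `σ(Sz, w) + σ(z, Sw) = 0` for all `z, w`. -/
def InSp (n : ℕ) (S : Matrix (Idx n) (Idx n) ℂ) : Prop := Sᵀ * Jmat n + Jmat n * S = 0

/-- `Re Q_S ≥ 0`: the real part of the quadratic form `Q_S(v) = σ(v, Sv)` is
positive semi-definite on `ℝ^{2n}`. -/
def RePosQ (n : ℕ) (S : Matrix (Idx n) (Idx n) ℂ) : Prop :=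
  ∀ v : Idx n → ℝ, 0 ≤ (sigmaC n (realVec n v) (S.mulVec (realVec n v))).re

/-- The generalized eigenspace `V_μ` of the matrix `S` for the eigenvalue `μ`. -/
def genEig (n : ℕ) (S : Matrix (Idx n) (Idx n) ℂ) (μ : ℂ) : Submodule ℂ (Idx n → ℂ) :=
  Module.End.maxGenEigenspace (Matrix.mulVecLin S) μ

/-- `V_r`: the sum of the generalized eigenspaces of `S` for real eigenvalues. -/
def Vreal (n : ℕ) (S : Matrix (Idx n) (Idx n) ℂ) : Submodule ℂ (Idx n → ℂ) :=
  ⨆ lam : ℝ, genEig n S (lam : ℂ)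

/-- `V_i`: the sum of the generalized eigenspaces of `S` for non-real eigenvalues. -/
def Vimag (n : ℕ) (S : Matrix (Idx n) (Idx n) ℂ) : Submodule ℂ (Idx n → ℂ) :=
  ⨆ μ : {z : ℂ // z.im ≠ 0}, genEig n S (μ : ℂ)

/-- `Sr` is the "real part" `S_r` of `S`: it agrees with `S` on `V_r` and vanishes on `V_i`. -/
def IsRealPart (n : ℕ) (S Sr : Matrix (Idx n) (Idx n) ℂ) : Prop :=
  (∀ v ∈ Vreal n S, Sr.mulVec v = S.mulVec v) ∧ ∀ v ∈ Vimag n S, Sr.mulVec v = 0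

/-- `Si` is the "imaginary part" `S_i` of `S`: it vanishes on `V_r` and agrees with `S`
on `V_i`. -/
def IsImagPart (n : ℕ) (S Si : Matrix (Idx n) (Idx n) ℂ) : Prop :=
  (∀ v ∈ Vreal n S, Si.mulVec v = 0) ∧ ∀ v ∈ Vimag n S, Si.mulVec v = S.mulVec v

/-- Condition (R): `V_λ ⊕ V_{−λ}` is invariant under complex conjugation for every
real `λ ≠ 0`. -/
def CondR (n : ℕ) (S : Matrix (Idx n) (Idx n) ℂ) : Prop :=
  ∀ lam : ℝ, lam ≠ 0 →
    ∀ z ∈ genEig n S (lam : ℂ) ⊔ genEig n S (-(lam : ℂ)),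
      conjVec n z ∈ genEig n S (lam : ℂ) ⊔ genEig n S (-(lam : ℂ))

/-- `ν = Σ_j ν_j`: the sum of the imaginary parts of the eigenvalues of `S` lying in the
upper half plane, counted with multiplicity. -/
def nuTotal (n : ℕ) (S : Matrix (Idx n) (Idx n) ℂ) : ℝ :=
  (S.charpoly.roots.map (fun z => max z.im 0)).sum

/-- `S_i ≠ 0`, i.e. `S` has at least one non-real eigenvalue. -/
def HasNonrealEig (n : ℕ) (S : Matrix (Idx n) (Idx n) ℂ) : Prop :=
  ∃ z ∈ S.charpoly.roots, z.im ≠ 0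

/-- Semisimple (= diagonalizable over `ℂ`) matrix. -/
def IsSemisimpleMat (n : ℕ) (D : Matrix (Idx n) (Idx n) ℂ) : Prop :=
  ∃ (P : Matrix (Idx n) (Idx n) ℂ) (d : Idx n → ℂ), IsUnit P ∧ D = P * Matrix.diagonal d * P⁻¹

/-- `S = D + N` is the Jordan decomposition of `S`: `D` semisimple, `N` nilpotent,
`DN = ND`. -/
def IsJordanDecomp (n : ℕ) (S D N : Matrix (Idx n) (Idx n) ℂ) : Prop :=
  S = D + N ∧ IsSemisimpleMat n D ∧ IsNilpotent N ∧ D * N = N * D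

/-- The matrix exponential `exp M = Σ M^k / k!`. -/
def matExp {ι : Type} [Fintype ι] [DecidableEq ι] (M : Matrix ι ι ℂ) : Matrix ι ι ℂ :=
  ∑' k : ℕ, ((k.factorial : ℂ)⁻¹) • M ^ k

/-- The matrix cosine `cos M = (exp(iM) + exp(-iM))/2`. -/
def matCos {ι : Type} [Fintype ι] [DecidableEq ι] (M : Matrix ι ι ℂ) : Matrix ι ι ℂ :=
  (2 : ℂ)⁻¹ • (matExp (Complex.I • M) + matExp (-(Complex.I • M)))

/-- The matrix sine `sin M = (exp(iM) - exp(-iM))/(2i)`. -/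
def matSin {ι : Type} [Fintype ι] [DecidableEq ι] (M : Matrix ι ι ℂ) : Matrix ι ι ℂ :=
  (2 * Complex.I)⁻¹ • (matExp (Complex.I • M) - matExp (-(Complex.I • M)))

/-- The matrix tangent `tan M = (sin M)(cos M)⁻¹` (junk value if `cos M` is singular). -/
def matTan {ι : Type} [Fintype ι] [DecidableEq ι] (M : Matrix ι ι ℂ) : Matrix ι ι ℂ :=
  matSin M * (matCos M)⁻¹

section helpers

theorem aux_exp_mulVec {ι : Type} [Fintype ι] [DecidableEq ι] (A : Matrix ι ι ℂ) (μ c : ℂ)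
    (v : ι → ℂ) (L : ℕ) (h : ((A - μ • 1) ^ L).mulVec v = 0) :
    (matExp (c • A)).mulVec v =
      ∑ k ∈ Finset.range L, (Complex.exp (c * μ) * (c ^ k / (k.factorial : ℂ))) •
        ((A - μ • 1) ^ k).mulVec v := by
  have hm : ∀ M : Matrix ι ι ℂ, matExp M = NormedSpace.exp M := by
    intro M
    rw [NormedSpace.exp_eq_tsum ℂ]
    rfl
  set N := A - μ • (1 : Matrix ι ι ℂ) with hN
  have hA : c • A = (c * μ) • (1 : Matrix ι ι ℂ) + c • N := by
    rw [hN, smul_sub, smul_smul]; abel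
  have hcomm : Commute ((c * μ) • (1 : Matrix ι ι ℂ)) (c • N) :=
    (Commute.one_left _).smul_left _
  have h1 : NormedSpace.exp ((c * μ) • (1 : Matrix ι ι ℂ)) = Complex.exp (c * μ) • 1 := by
    rw [Matrix.smul_one_eq_diagonal, Matrix.exp_diagonal, Matrix.smul_one_eq_diagonal]
    congr 1
    ext i
    rw [Pi.coe_exp, Complex.exp_eq_exp_ℂ]
  have hsum : HasSum (fun k : ℕ => ((k.factorial : ℂ)⁻¹) • (c • N) ^ k)
      (NormedSpace.exp (c • N)) := by
    open scoped Matrix.Norms.Operator in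
    exact NormedSpace.exp_series_hasSum_exp' (𝕂 := ℂ) (c • N)
  have hcont : Continuous (fun M : Matrix ι ι ℂ => M.mulVec v) := by fun_prop
  have hsum2 : HasSum (fun k : ℕ => (c ^ k / (k.factorial : ℂ)) • (N ^ k).mulVec v)
      ((NormedSpace.exp (c • N)).mulVec v) := by
    have := hsum.map (⟨⟨fun M : Matrix ι ι ℂ => M.mulVec v, by simp⟩, by
      intro x y; simp [Matrix.add_mulVec]⟩ : Matrix ι ι ℂ →+ (ι → ℂ)) hcont
    refine this.congr_fun ?_ 
    intro k
    simp [Matrix.smul_mulVec, smul_pow, smul_smul, div_eq_inv_mul]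
  have hfin : (NormedSpace.exp (c • N)).mulVec v =
      ∑ k ∈ Finset.range L, (c ^ k / (k.factorial : ℂ)) • (N ^ k).mulVec v := by
    refine hsum2.unique (hasSum_sum_of_ne_finset_zero ?_)
    intro k hk
    have hk' : L ≤ k := by simpa using hk
    obtain ⟨j, rfl⟩ := Nat.exists_eq_add_of_le' hk'
    rw [pow_add N, ← Matrix.mulVec_mulVec, h]; simp
  rw [hm, hA, Matrix.exp_add_of_commute _ _ hcomm, h1, ← Matrix.mulVec_mulVec, hfin,
    Matrix.smul_mulVec, Matrix.one_mulVec, Finset.smul_sum]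
  simp [smul_smul]

theorem aux_iter_cos (k : ℕ) : iteratedDeriv k Complex.cos = fun z =>
    (2 : ℂ)⁻¹ * (I ^ k * Complex.exp (I * z) + (-I) ^ k * Complex.exp (-I * z)) := by
  induction k with
  | zero => ext z; simp [Complex.cos]; ring_nf
  | succ k ih =>
    rw [iteratedDeriv_succ, ih]
    ext z
    have h1 : HasDerivAt (fun z : ℂ => Complex.exp (I * z)) (Complex.exp (I * z) * (I * 1)) z :=
      ((hasDerivAt_id z).const_mul I).cexp
    have h2 : HasDerivAt (fun z : ℂ => Complex.exp (-I * z)) (Complex.exp (-I * z) * (-I * 1)) z :=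
      ((hasDerivAt_id z).const_mul (-I)).cexp
    refine (((h1.const_mul (I ^ k)).add (h2.const_mul ((-I) ^ k))).const_mul ((2 : ℂ)⁻¹)).deriv.trans ?_
    ring

theorem aux_iter_sin (k : ℕ) : iteratedDeriv k Complex.sin = fun z =>
    (2 * I : ℂ)⁻¹ * (I ^ k * Complex.exp (I * z) - (-I) ^ k * Complex.exp (-I * z)) := by
  induction k with
  | zero =>
    ext z
    simp only [iteratedDeriv_zero, Complex.sin, pow_zero, one_mul, mul_inv, Complex.inv_I]
    ring_nf
  | succ k ih =>
    rw [iteratedDeriv_succ, ih]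
    ext z
    have h1 : HasDerivAt (fun z : ℂ => Complex.exp (I * z)) (Complex.exp (I * z) * (I * 1)) z :=
      ((hasDerivAt_id z).const_mul I).cexp
    have h2 : HasDerivAt (fun z : ℂ => Complex.exp (-I * z)) (Complex.exp (-I * z) * (-I * 1)) z :=
      ((hasDerivAt_id z).const_mul (-I)).cexp
    refine (((h1.const_mul (I ^ k)).sub (h2.const_mul ((-I) ^ k))).const_mul ((2 * I : ℂ)⁻¹)).deriv.trans ?_
    ring

theorem aux_cos_mulVec {ι : Type} [Fintype ι] [DecidableEq ι] (A : Matrix ι ι ℂ) (μ t : ℂ)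
    (v : ι → ℂ) (L : ℕ) (h : ((A - μ • 1) ^ L).mulVec v = 0) :
    (matCos (t • A)).mulVec v =
      ∑ k ∈ Finset.range L, (t ^ k * iteratedDeriv k Complex.cos (μ * t) / (k.factorial : ℂ)) •
        ((A - μ • 1) ^ k).mulVec v := by
  have e1 : I • (t • A) = (I * t) • A := smul_smul _ _ _
  have e2 : -(I • (t • A)) = (-I * t) • A := by rw [e1, ← neg_smul]; ring_nf
  rw [matCos, e2, e1, Matrix.smul_mulVec, Matrix.add_mulVec, aux_exp_mulVec A μ _ v L h,
    aux_exp_mulVec A μ _ v L h, ← Finset.sum_add_distrib, Finset.smul_sum]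
  refine Finset.sum_congr rfl fun k _ => ?_
  rw [← add_smul, smul_smul, aux_iter_cos]
  congr 1
  simp only [mul_pow]
  ring_nf

theorem aux_sin_mulVec {ι : Type} [Fintype ι] [DecidableEq ι] (A : Matrix ι ι ℂ) (μ t : ℂ)
    (v : ι → ℂ) (L : ℕ) (h : ((A - μ • 1) ^ L).mulVec v = 0) :
    (matSin (t • A)).mulVec v =
      ∑ k ∈ Finset.range L, (t ^ k * iteratedDeriv k Complex.sin (μ * t) / (k.factorial : ℂ)) •
        ((A - μ • 1) ^ k).mulVec v := by
  have e1 : I • (t • A) = (I * t) • A := smul_smul _ _ _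
  have e2 : -(I • (t • A)) = (-I * t) • A := by rw [e1, ← neg_smul]; ring_nf
  rw [matSin, e2, e1, Matrix.smul_mulVec, Matrix.sub_mulVec, aux_exp_mulVec A μ _ v L h,
    aux_exp_mulVec A μ _ v L h, ← Finset.sum_sub_distrib, Finset.smul_sum]
  refine Finset.sum_congr rfl fun k _ => ?_
  rw [← sub_smul, smul_smul, aux_iter_sin]
  congr 1
  simp only [mul_pow]
  ring_nf

theorem aux_leibniz (z : ℂ) (hz : Complex.cos z ≠ 0) (m : ℕ) :
    iteratedDeriv m Complex.sin z / (m.factorial : ℂ) = ∑ i ∈ Finset.range (m + 1),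
      (iteratedDeriv i Complex.cos z / (i.factorial : ℂ)) *
        (iteratedDeriv (m - i) Complex.tan z / ((m - i).factorial : ℂ)) := by
  have he : Complex.sin =ᶠ[nhds z] (Complex.cos * Complex.tan) := by
    filter_upwards [Complex.continuous_cos.continuousAt.eventually_ne hz] with y hy
    rw [Pi.mul_apply, mul_comm, Complex.tan_mul_cos hy]
  rw [he.iteratedDeriv_eq m, iteratedDeriv_mul Complex.contDiff_cos.contDiffAt
    (Complex.contDiffAt_tan.2 hz), Finset.sum_div]
  refine Finset.sum_congr rfl fun i hi => ?_
  have hi' : i ≤ m := by simpa [Nat.lt_succ_iff] using hi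
  rw [Nat.cast_choose ℂ hi']
  have a1 : (m.factorial : ℂ) ≠ 0 := by exact_mod_cast m.factorial_ne_zero
  have a2 : (i.factorial : ℂ) ≠ 0 := by exact_mod_cast i.factorial_ne_zero
  have a3 : ((m - i).factorial : ℂ) ≠ 0 := by exact_mod_cast (m - i).factorial_ne_zero
  field_simp

theorem aux_commute {ι : Type} [Fintype ι] [DecidableEq ι] (A B : Matrix ι ι ℂ)
    (h : Commute A B) : Commute (matExp A) B := by
  have hm : ∀ M : Matrix ι ι ℂ, matExp M = NormedSpace.exp M := by
    intro M
    rw [NormedSpace.exp_eq_tsum ℂ]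
    rfl
  rw [hm]
  open scoped Matrix.Norms.Operator in
  exact h.exp_left

theorem aux_cos_ne {ι : Type} [Fintype ι] [DecidableEq ι] (A : Matrix ι ι ℂ) (μ t : ℂ)
    (v : ι → ℂ) (L : ℕ) (h : ((A - μ • 1) ^ L).mulVec v = 0) (hv : v ≠ 0)
    (hu : IsUnit (matCos (t • A)).det) : Complex.cos (μ * t) ≠ 0 := by
  intro hc
  induction L generalizing v with
  | zero => exact hv (by simpa using h)
  | succ L ih =>
    by_cases h0 : ((A - μ • 1) ^ 1).mulVec v = 0
    · have := aux_cos_mulVec A μ t v 1 h0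
      simp [hc] at this
      have hinj := Matrix.mulVec_injective_of_isUnit ((Matrix.isUnit_iff_isUnit_det _).2 hu)
      exact hv (hinj (by simpa using this))
    · refine ih _ ?_ h0
      rw [Matrix.mulVec_mulVec, ← pow_add, h]

theorem aux_tan_mulVec {ι : Type} [Fintype ι] [DecidableEq ι] (A : Matrix ι ι ℂ) (μ t : ℂ)
    (v : ι → ℂ) (L : ℕ) (h : ((A - μ • 1) ^ L).mulVec v = 0)
    (hu : IsUnit (matCos (t • A)).det) :
    (matTan (t • A)).mulVec v =
      ∑ k ∈ Finset.range L, (t ^ k * iteratedDeriv k Complex.tan (μ * t) / (k.factorial : ℂ)) •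
        ((A - μ • 1) ^ k).mulVec v := by
  by_cases hv : v = 0
  · simp [hv]
  have hc := aux_cos_ne A μ t v L h hv hu
  have hz : ∀ k, L ≤ k → ((A - μ • 1) ^ k).mulVec v = 0 := by
    intro k hk
    obtain ⟨j, rfl⟩ := Nat.exists_eq_add_of_le' hk
    rw [pow_add, ← Matrix.mulVec_mulVec, h]; simp
  have key : (matCos (t • A)).mulVec (∑ k ∈ Finset.range L,
      (t ^ k * iteratedDeriv k Complex.tan (μ * t) / (k.factorial : ℂ)) •
        ((A - μ • 1) ^ k).mulVec v) = (matSin (t • A)).mulVec v := by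
    have hk0 : ((A - μ • 1) ^ L).mulVec (∑ k ∈ Finset.range L,
      (t ^ k * iteratedDeriv k Complex.tan (μ * t) / (k.factorial : ℂ)) •
        ((A - μ • 1) ^ k).mulVec v) = 0 := by
      rw [Matrix.mulVec_sum]
      refine Finset.sum_eq_zero fun k _ => ?_
      rw [Matrix.mulVec_smul, Matrix.mulVec_mulVec, ← pow_add, hz _ (by omega), smul_zero]
    rw [aux_cos_mulVec A μ t _ L hk0, aux_sin_mulVec A μ t v L h]
    have hr : ∀ m ∈ Finset.range L,
        (t ^ m * iteratedDeriv m Complex.sin (μ * t) / (m.factorial : ℂ)) •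
          ((A - μ • 1) ^ m).mulVec v = ∑ i ∈ Finset.range (m + 1),
          (fun i j : ℕ => ((t ^ i * iteratedDeriv i Complex.cos (μ * t) / (i.factorial : ℂ)) *
          (t ^ j * iteratedDeriv j Complex.tan (μ * t) / (j.factorial : ℂ))) •
            ((A - μ • 1) ^ (i + j)).mulVec v) i (m - i) := by
      intro m _
      rw [mul_div_assoc, aux_leibniz _ hc, Finset.mul_sum, Finset.sum_smul]
      refine Finset.sum_congr rfl fun i hi => ?_
      have hi' : i ≤ m := by simpa [Nat.lt_succ_iff] using hi
      obtain ⟨j, rfl⟩ := Nat.exists_eq_add_of_le hi'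
      simp only [Nat.add_sub_cancel_left]
      congr 1
      rw [pow_add]; ring
    refine Eq.trans ?_ ((Finset.sum_congr rfl hr).trans (Finset.sum_range_diag_flip L
      (fun i j : ℕ => ((t ^ i * iteratedDeriv i Complex.cos (μ * t) / (i.factorial : ℂ)) *
          (t ^ j * iteratedDeriv j Complex.tan (μ * t) / (j.factorial : ℂ))) •
            ((A - μ • 1) ^ (i + j)).mulVec v))).symm
    refine Finset.sum_congr rfl fun i _ => ?_
    rw [Matrix.mulVec_sum, Finset.smul_sum]
    symm
    refine Finset.sum_subset_zero_on_sdiff (Finset.range_mono (Nat.sub_le _ _)) ?_ ?_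
    · intro j hj
      simp only [Finset.mem_sdiff, Finset.mem_range] at hj
      rw [Matrix.mulVec_smul, Matrix.mulVec_mulVec, ← pow_add, hz _ (by omega)]; simp
    · intro j _
      rw [Matrix.mulVec_smul, Matrix.mulVec_mulVec, ← pow_add, smul_smul]
  have hcomm : Commute (matSin (t • A)) (matCos (t • A)) := by
    have hee : ∀ B C : Matrix ι ι ℂ, Commute B C → Commute (matExp B) (matExp C) :=
      fun B C h => aux_commute B _ (aux_commute C B h.symm).symm
    have q := Commute.refl (I • t • A)
    unfold matSin matCos
    refine Commute.smul_left (Commute.smul_right ?_ _) _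
    exact ((hee _ _ q).sub_left (hee _ _ q.neg_left)).add_right
      ((hee _ _ q.neg_right).sub_left (hee _ _ q.neg_left.neg_right))
  have htan : matTan (t • A) = (matCos (t • A))⁻¹ * matSin (t • A) := by
    have hinv := Matrix.nonsing_inv_mul _ hu
    have hinv' := Matrix.mul_nonsing_inv _ hu
    unfold matTan
    calc _ = (matCos (t • A))⁻¹ * (matCos (t • A) * matSin (t • A)) * (matCos (t • A))⁻¹ := by
          rw [← mul_assoc, hinv, one_mul]
      _ = _ := by rw [← hcomm.eq, ← mul_assoc, mul_assoc _ _ (matCos (t • A))⁻¹, hinv', mul_one]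
  rw [htan, ← Matrix.mulVec_mulVec, ← key, Matrix.mulVec_mulVec, Matrix.nonsing_inv_mul _ hu,
    Matrix.one_mulVec]

theorem aux_tan_neg (k : ℕ) (z : ℂ) :
    iteratedDeriv k Complex.tan (-z) = (-1) ^ (k + 1) * iteratedDeriv k Complex.tan z := by
  have h := iteratedDeriv_comp_neg k Complex.tan z
  have e : (fun x : ℂ => Complex.tan (-x)) = fun x => -Complex.tan x := by
    ext x; exact Complex.tan_neg x
  rw [e, iteratedDeriv_fun_neg, smul_eq_mul] at h
  have h2 : ((-1 : ℂ) ^ k) * (-1) ^ k = 1 := by rw [← mul_pow]; simp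
  calc _ = ((-1 : ℂ) ^ k * (-1) ^ k) * iteratedDeriv k Complex.tan (-z) := by rw [h2, one_mul]
    _ = (-1) ^ k * -iteratedDeriv k Complex.tan z := by rw [mul_assoc, ← h]
    _ = _ := by ring

theorem aux_mem_genEig (n : ℕ) (S : Matrix (Idx n) (Idx n) ℂ) (μ : ℂ) (v : Idx n → ℂ) :
    v ∈ genEig n S μ ↔ ∃ k : ℕ, ((S - μ • 1) ^ k).mulVec v = 0 := by
  have e : ∀ k : ℕ, ((Matrix.mulVecLin S - μ • (1 : Module.End ℂ (Idx n → ℂ))) ^ k) v =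
      ((S - μ • 1) ^ k).mulVec v := by
    intro k
    have h1 : Matrix.mulVecLin S - μ • (1 : Module.End ℂ (Idx n → ℂ)) =
        Matrix.toLin' (S - μ • 1) := by
      rw [map_sub, map_smul, Matrix.toLin'_one]
      rfl
    rw [h1, ← Matrix.toLin'_pow, Matrix.toLin'_apply]
  unfold genEig
  rw [Module.End.mem_maxGenEigenspace]
  simp only [e]

theorem aux_proj (n : ℕ) (S : Matrix (Idx n) (Idx n) ℂ) :
    ∃ P : ℂ → Matrix (Idx n) (Idx n) ℂ, ∀ μ, ∀ v ∈ genEig n S μ,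
      (P μ).mulVec v = v ∧ ∀ ν, ν ≠ μ → (P ν).mulVec v = 0 := by
  have hind : iSupIndep (genEig n S) := Module.End.independent_maxGenEigenspace _
  have htop : ⨆ μ, genEig n S μ = ⊤ := Module.End.iSup_maxGenEigenspace_eq_top _
  have hc : ∀ μ, IsCompl (genEig n S μ) (⨆ (ν) (_ : ν ≠ μ), genEig n S ν) := by
    intro μ
    refine ⟨hind μ, ?_⟩
    rw [codisjoint_iff_le_sup, ← htop]
    refine iSup_le fun ν => ?_
    by_cases h : ν = μ
    · subst h; exact le_sup_left
    · exact le_sup_of_le_right (le_iSup₂_of_le ν h le_rfl)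
  refine ⟨fun μ => LinearMap.toMatrix' ((genEig n S μ).projection _ (hc μ)), ?_⟩
  intro μ v hv
  refine ⟨?_, ?_⟩
  · rw [LinearMap.toMatrix'_mulVec]
    exact Submodule.projection_apply_of_mem_left (hc μ) hv
  · intro ν hν
    rw [LinearMap.toMatrix'_mulVec, Submodule.projection_apply_eq_zero_iff]
    exact (le_iSup₂_of_le (f := fun ν' (_ : ν' ≠ ν) => genEig n S ν') μ hν.symm le_rfl) hv

theorem aux_root (n : ℕ) (S : Matrix (Idx n) (Idx n) ℂ) (μ : ℂ) :
    μ ∈ S.charpoly.roots ↔ (μ • 1 - S).det = 0 := by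
  rw [Polynomial.mem_roots (Matrix.charpoly_monic S).ne_zero, Polynomial.IsRoot,
    Matrix.eval_charpoly, Matrix.scalar_apply, Matrix.smul_one_eq_diagonal]

theorem aux_root_neg (n : ℕ) (S : Matrix (Idx n) (Idx n) ℂ) (hS : InSp n S) (μ : ℂ)
    (h : μ ∈ S.charpoly.roots) : -μ ∈ S.charpoly.roots := by
  rw [aux_root] at h ⊢
  have hJ : Jmat n * Jmat n = -1 := by
    simp [Jmat, Matrix.fromBlocks_multiply, ← Matrix.fromBlocks_one, Matrix.fromBlocks_neg]
  have hJd : (Jmat n).det ≠ 0 := by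
    intro h0
    have := congrArg Matrix.det hJ
    rw [Matrix.det_mul, h0, Matrix.det_neg, Matrix.det_one] at this
    simp at this
  have hS' : Sᵀ * Jmat n = -(Jmat n * S) := eq_neg_of_add_eq_zero_left hS
  have e : Jmat n * ((-μ) • 1 - S) = -((μ • 1 - S)ᵀ * Jmat n) := by
    rw [Matrix.transpose_sub, Matrix.sub_mul, hS', Matrix.mul_sub]
    simp
    abel
  have := congrArg Matrix.det e
  rw [Matrix.det_mul, Matrix.det_neg, Matrix.det_mul, Matrix.det_transpose, h] at this
  simpa [hJd] using this

theorem aux_root_of_mem (n : ℕ) (S : Matrix (Idx n) (Idx n) ℂ) (μ : ℂ) (v : Idx n → ℂ)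
    (hv : v ∈ genEig n S μ) (h0 : v ≠ 0) : μ ∈ S.charpoly.roots := by
  rw [aux_root]
  by_contra hd
  have hd' : IsUnit (S - μ • 1) := by
    have : IsUnit (μ • 1 - S) := (Matrix.isUnit_iff_isUnit_det _).2 (isUnit_iff_ne_zero.2 hd)
    simpa using this.neg
  obtain ⟨k, hk⟩ := (aux_mem_genEig n S μ v).1 hv
  exact h0 (Matrix.mulVec_injective_of_isUnit (hd'.pow k) (by simpa using hk))

theorem aux_genEig_real (n : ℕ) (S Si : Matrix (Idx n) (Idx n) ℂ) (hSi : IsImagPart n S Si)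
    (μ : ℂ) (hμ : μ.im = 0) (v : Idx n → ℂ) (hv : v ∈ genEig n S μ) : Si.mulVec v = 0 := by
  apply hSi.1
  have : μ = (μ.re : ℂ) := Complex.ext (by simp) (by simp [hμ])
  rw [this] at hv
  exact Submodule.mem_iSup_of_mem (p := fun lam : ℝ => genEig n S (lam : ℂ)) μ.re hv

theorem aux_genEig_imag (n : ℕ) (S Si : Matrix (Idx n) (Idx n) ℂ) (hSi : IsImagPart n S Si)
    (μ : ℂ) (hμ : μ.im ≠ 0) (v : Idx n → ℂ) (hv : v ∈ genEig n S μ) : v ∈ genEig n Si μ := by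
  have hag : ∀ u ∈ genEig n S μ, (Si - μ • 1).mulVec u = (S - μ • 1).mulVec u := by
    intro u hu
    rw [Matrix.sub_mulVec, Matrix.sub_mulVec, hSi.2 u]
    exact Submodule.mem_iSup_of_mem (p := fun z : {z : ℂ // z.im ≠ 0} => genEig n S (z : ℂ))
      ⟨μ, hμ⟩ hu
  have hk : ∀ k : ℕ, ∀ u ∈ genEig n S μ,
      ((Si - μ • 1) ^ k).mulVec u = ((S - μ • 1) ^ k).mulVec u := by
    intro k
    induction k with
    | zero => intro u _; simp
    | succ k ih =>
      intro u hu
      rw [pow_succ, pow_succ, ← Matrix.mulVec_mulVec, ← Matrix.mulVec_mulVec, hag u hu]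
      refine ih _ ?_
      obtain ⟨j, hj⟩ := (aux_mem_genEig n S μ u).1 hu
      refine (aux_mem_genEig n S μ _).2 ⟨j, ?_⟩
      rw [Matrix.mulVec_mulVec, ← pow_succ, pow_succ', ← Matrix.mulVec_mulVec, hj,
        Matrix.mulVec_zero]
  obtain ⟨k, h⟩ := (aux_mem_genEig n S μ v).1 hv
  exact (aux_mem_genEig n Si μ v).2 ⟨k, by rw [hk k v hv, h]⟩

/-- The coefficient matrix attached to the pair `±ω`. -/
def auxA (n : ℕ) (Si : Matrix (Idx n) (Idx n) ℂ) (P : ℂ → Matrix (Idx n) (Idx n) ℂ)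
    (ω : ℂ) (k : ℕ) : Matrix (Idx n) (Idx n) ℂ :=
  ((k.factorial : ℂ)⁻¹) • (Jmat n * ((Si - ω • 1) ^ k * P ω +
    ((-1 : ℂ) ^ (k + 1)) • ((Si - (-ω) • 1) ^ k * P (-ω))))

theorem auxA_mulVec (n : ℕ) (Si : Matrix (Idx n) (Idx n) ℂ) (P : ℂ → Matrix (Idx n) (Idx n) ℂ)
    (ω : ℂ) (k : ℕ) (v : Idx n → ℂ) : (auxA n Si P ω k).mulVec v =
    ((k.factorial : ℂ)⁻¹) • (Jmat n).mulVec (((Si - ω • 1) ^ k).mulVec ((P ω).mulVec v) +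
    ((-1 : ℂ) ^ (k + 1)) • ((Si - (-ω) • 1) ^ k).mulVec ((P (-ω)).mulVec v)) := by
  simp only [auxA, Matrix.smul_mulVec, ← Matrix.mulVec_mulVec, Matrix.add_mulVec]

end helpers

/-- let `±ω_1, …, ±ω_{n_1}` be the non-real eigenvalues of `S` (listed with
multiplicity by `l`, `Im ω_j > 0`) and let `ℓ+1` be the dimension of the largest Jordan
block of `S_i`. Then there are quadratic forms `Q_{jk}` (given by symmetric matrices)
with `σ(w, tan(tS_i)w) = Σ_j Σ_k t^k tan^{(k)}(ω_j t) Q_{jk}(w)` whenever `cos(tS_i)` is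
invertible. -/
theorem statement15 (n : ℕ) (S Si : Matrix (Idx n) (Idx n) ℂ)
    (hS : InSp n S) (hSi : IsImagPart n S Si)
    (l : List ℂ) (hl : (l : Multiset ℂ) = S.charpoly.roots.filter (fun z => 0 < z.im))
    (ℓ : ℕ)
    (hub : ∀ μ : ℂ, ∀ z ∈ genEig n Si μ, ((Si - μ • 1) ^ (ℓ + 1)).mulVec z = 0)
    (hmax : ∃ μ : ℂ, ∃ z ∈ genEig n Si μ, ((Si - μ • 1) ^ ℓ).mulVec z ≠ 0) :
    ∃ Q : Fin l.length → Fin (ℓ + 1) → Matrix (Idx n) (Idx n) ℂ,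
      (∀ i k, (Q i k)ᵀ = Q i k) ∧
      ∀ t : ℂ, IsUnit (matCos (t • Si)).det →
        ∀ w : Idx n → ℂ,
          sigmaC n w ((matTan (t • Si)).mulVec w) =
            ∑ i : Fin l.length, ∑ k : Fin (ℓ + 1), t ^ (k : ℕ) * iteratedDeriv (k : ℕ) Complex.tan (l.get i * t) *
              (w ⬝ᵥ (Q i k).mulVec w) := by

  classical
  obtain ⟨P, hP⟩ := aux_proj n S
  let good : Fin l.length → Prop := fun i => ∀ j, l.get j = l.get i → i ≤ j
  have hgood : ∀ ω ∈ l, ∃ i, good i ∧ l.get i = ω := by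
    intro ω hω
    obtain ⟨i, hi⟩ := List.mem_iff_get.1 hω
    obtain ⟨m, hm, hmin⟩ := (Finset.univ.filter fun j : Fin l.length => l.get j = ω).exists_min_image
      id ⟨i, by simp [← hi]⟩
    simp only [Finset.mem_filter, Finset.mem_univ, true_and, id] at hm hmin
    exact ⟨m, fun j hj => hmin j (hj.trans hm), hm⟩
  have himl : ∀ i, 0 < (l.get i).im := by
    intro i
    have : l.get i ∈ (l : Multiset ℂ) := Multiset.mem_coe.2 (List.get_mem l i)
    rw [hl, Multiset.mem_filter] at this
    exact this.2
  have hmeml : ∀ ω ∈ S.charpoly.roots, 0 < ω.im → ω ∈ l := by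
    intro ω h1 h2
    rw [← Multiset.mem_coe, hl, Multiset.mem_filter]
    exact ⟨h1, h2⟩
  let B : Fin l.length → Fin (ℓ + 1) → Matrix (Idx n) (Idx n) ℂ :=
    fun i k => if good i then auxA n Si P (l.get i) k else 0
  have hB : ∀ t : ℂ, IsUnit (matCos (t • Si)).det → ∀ w : Idx n → ℂ,
      (Jmat n).mulVec ((matTan (t • Si)).mulVec w) =
        ∑ i : Fin l.length, ∑ k : Fin (ℓ + 1),
          (t ^ (k : ℕ) * iteratedDeriv (k : ℕ) Complex.tan (l.get i * t)) • (B i k).mulVec w := by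
    intro t ht w
    have hw : w ∈ ⨆ μ, genEig n S μ := by
      have htop : ⨆ μ, genEig n S μ = ⊤ := Module.End.iSup_maxGenEigenspace_eq_top _
      rw [htop]; trivial
    refine Submodule.iSup_induction (genEig n S) (motive := fun w =>
      (Jmat n).mulVec ((matTan (t • Si)).mulVec w) =
        ∑ i : Fin l.length, ∑ k : Fin (ℓ + 1),
          (t ^ (k : ℕ) * iteratedDeriv (k : ℕ) Complex.tan (l.get i * t)) • (B i k).mulVec w)
      hw ?_ ?_ ?_
    · intro μ v hv
      by_cases hv0 : v = 0
      · simp [hv0]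
      obtain ⟨hPv, hPn⟩ := hP μ v hv
      rcases lt_trichotomy μ.im 0 with him | him | him
      · -- eigenvalue in the lower half plane
        have hmem : -μ ∈ l := hmeml _ (aux_root_neg n S hS _ (aux_root_of_mem n S μ v hv hv0))
          (by simpa using him)
        obtain ⟨i0, hg, hi0⟩ := hgood _ hmem
        have hvi := aux_genEig_imag n S Si hSi μ him.ne v hv
        rw [aux_tan_mulVec Si μ t v (ℓ + 1) (hub μ v hvi) ht, Finset.sum_eq_single i0,
          Matrix.mulVec_sum, Finset.sum_range]
        · refine Finset.sum_congr rfl fun k _ => ?_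
          simp only [B, if_pos hg, auxA_mulVec, hi0, neg_neg, hPv]
          rw [hPn (-μ) (by intro h; rw [← h] at him; have := congrArg Complex.im h; simp at this him; linarith)]
          rw [neg_mul, aux_tan_neg, Matrix.mulVec_zero, zero_add, Matrix.mulVec_smul,
            Matrix.mulVec_smul, smul_smul, smul_smul]
          congr 1
          have h2 : ((-1 : ℂ) ^ ((k : ℕ) + 1)) * (-1) ^ ((k : ℕ) + 1) = 1 := by
            rw [← mul_pow]; simp
          linear_combination (-(t ^ (k : ℕ) * iteratedDeriv (k : ℕ) Complex.tan (μ * t) *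
            ((k : ℕ).factorial : ℂ)⁻¹)) * h2
        · intro i _ hne
          refine Finset.sum_eq_zero fun k _ => ?_
          by_cases hgi : good i
          · have hne' : l.get i ≠ -μ := fun h =>
              hne (le_antisymm (hgi _ (hi0.trans h.symm)) (hg _ (h.trans hi0.symm)))
            have a1 : l.get i ≠ μ := fun h => by have := himl i; rw [h] at this; linarith
            have a2 : -l.get i ≠ μ := fun h => hne' (by rw [← h, neg_neg])
            simp only [B, if_pos hgi, auxA_mulVec, hPn _ a1, hPn _ a2]
            simp
          · simp only [B, if_neg hgi]; simp
        · simp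
      · -- real eigenvalue
        have h0 := aux_genEig_real n S Si hSi μ him v hv
        have h1 := aux_tan_mulVec Si 0 t v 1 (by simpa using h0) ht
        have h2 : (matTan (t • Si)).mulVec v = 0 := by simpa using h1
        rw [h2, Matrix.mulVec_zero]
        symm
        refine Finset.sum_eq_zero fun i _ => Finset.sum_eq_zero fun k _ => ?_
        by_cases hgi : good i
        · have hi := himl i
          have a1 : l.get i ≠ μ := fun h => by rw [h] at hi; linarith
          have a2 : -l.get i ≠ μ := fun h => by
            rw [← h, Complex.neg_im] at him; linarith
          simp only [B, if_pos hgi, auxA_mulVec, hPn _ a1, hPn _ a2]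
          simp
        · simp only [B, if_neg hgi]; simp
      · -- eigenvalue in the upper half plane
        have hmem : μ ∈ l := hmeml _ (aux_root_of_mem n S μ v hv hv0) him
        obtain ⟨i0, hg, hi0⟩ := hgood _ hmem
        have hvi := aux_genEig_imag n S Si hSi μ him.ne' v hv
        rw [aux_tan_mulVec Si μ t v (ℓ + 1) (hub μ v hvi) ht, Finset.sum_eq_single i0,
          Matrix.mulVec_sum, Finset.sum_range]
        · refine Finset.sum_congr rfl fun k _ => ?_
          simp only [B, if_pos hg, auxA_mulVec, hi0, hPv]
          rw [hPn (-μ) (by intro h; have := congrArg Complex.im h; simp at this; linarith)]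
          rw [Matrix.mulVec_zero, smul_zero, add_zero, Matrix.mulVec_smul, smul_smul]
          rfl
        · intro i _ hne
          refine Finset.sum_eq_zero fun k _ => ?_
          by_cases hgi : good i
          · have a1 : l.get i ≠ μ := fun h =>
              hne (le_antisymm (hgi _ (hi0.trans h.symm)) (hg _ (h.trans hi0.symm)))
            have hi := himl i
            have a2 : -l.get i ≠ μ := fun h => by
              rw [← h, Complex.neg_im] at him; linarith
            simp only [B, if_pos hgi, auxA_mulVec, hPn _ a1, hPn _ a2]
            simp
          · simp only [B, if_neg hgi]; simp
        · simp
    · simp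
    · intro x y hx hy
      rw [Matrix.mulVec_add, Matrix.mulVec_add, hx, hy]
      simp only [Matrix.mulVec_add, smul_add, Finset.sum_add_distrib]
  refine ⟨fun i k => (2 : ℂ)⁻¹ • (B i k + (B i k)ᵀ), ?_, ?_⟩
  · intro i k
    simp [add_comm]
  · intro t ht w
    have hsym : ∀ M : Matrix (Idx n) (Idx n) ℂ,
        w ⬝ᵥ ((2 : ℂ)⁻¹ • (M + Mᵀ)).mulVec w = w ⬝ᵥ M.mulVec w := by
      intro M
      have : w ⬝ᵥ Mᵀ.mulVec w = w ⬝ᵥ M.mulVec w := by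
        rw [Matrix.mulVec_transpose, dotProduct_comm, Matrix.dotProduct_mulVec]
      rw [Matrix.smul_mulVec, dotProduct_smul, Matrix.add_mulVec, dotProduct_add, this, smul_eq_mul]
      ring
    simp only [hsym]
    rw [sigmaC, hB t ht w, dotProduct_sum]
    refine Finset.sum_congr rfl fun i _ => ?_
    rw [dotProduct_sum]
    refine Finset.sum_congr rfl fun k _ => ?_
    rw [dotProduct_smul, smul_eq_mul]
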